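/- arXiv:0707.3725 — 3 statements merged into one kernel-verified Lean document; each statement's English description precedes it below -/
import Mathlib

section
/- Let I be a finite type and let t be a rooted tree on I. Consider the interval consisting of all forests f on I with f ⊑ t, partially ordered by the grafting order ⊑. The map sending such a forest f to its set of minimal elements is an order anti-isomorphism from this interval onto the set of nonempty lower sets of the poset (I, ≤_t), ordered by inclusion. -/
/-!
A forest `f ⊑ t` is determined by its set of minimal elements: `f` is the order obtained from `t`
by cutting, for every minimal element `z` of `f`, the edge of `t` entering `z`. Concretely,
`x ≤_f y` iff `x ≤_t y` and no minimal element of `f` lies in the half-open interval `(x, y]` of `t`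
(`cutOrder`). This description is proved by induction along the graftings leading from `f` to `t`,
together with the fact that the minimal elements form a nonempty lower set of `t` (`cut_spec`).

Conversely, cutting along a nonempty lower set `S` gives a forest whose minimal elements are exactly
`S` (`minSet_cutOrder`). Deleting a maximal element `r'` from a lower set `S` that retains the root
corresponds to a single grafting of `r'` below its `t`-predecessor (`singleGraft_cutOrder`). Hence
`S ⊆ S'` implies `cut S' ⊑ cut S` (`graftLE_cutOrder`), and as `t` is the cut along its root, every
cut lies below `t`. That `f ⊑ g` implies `Min g ⊆ Min f` is clear, since a grafting only adds
relations.
-/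

/-- A forest on `I`: a partial order in which every principal lower set is a chain. -/
def IsForest {I : Type*} (f : PartialOrder I) : Prop :=
  ∀ v : I, IsChain f.le {u : I | f.le u v}

/-- A rooted tree on `I`: a forest with a least element (the root). -/
def IsRootedTree {I : Type*} (t : PartialOrder I) : Prop :=
  (∃ r : I, ∀ v : I, t.le r v) ∧ IsForest t

/-- `g` is obtained from `f` by a single grafting: there are two distinct minimal
elements `r, r'` of `f` such that `x ≤_g y ↔ x ≤_f y ∨ (x = r ∧ r' ≤_f y)`. -/
def SingleGraft {I : Type*} (f g : PartialOrder I) : Prop :=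
  ∃ r r' : I, r ≠ r' ∧ (∀ y, f.le y r → y = r) ∧ (∀ y, f.le y r' → y = r') ∧
    ∀ x y : I, g.le x y ↔ (f.le x y ∨ (x = r ∧ f.le r' y))

/-- The grafting order: reflexive-transitive closure of single grafting. -/
def GraftLE {I : Type*} (f g : PartialOrder I) : Prop :=
  Relation.ReflTransGen SingleGraft f g

/-- The set of minimal elements (roots of the components) of `f`. -/
def minSet {I : Type*} (f : PartialOrder I) : Set I := {x | ∀ y, f.le y x → y = x}

/-- The relation obtained from `t` by cutting the edges entering the elements of `S`: `x` is below
`y` when `x ≤_t y` and the half-open interval `(x, y]` of `t` avoids `S`. -/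
def CutRel {I : Type*} (t : PartialOrder I) (S : Set I) (x y : I) : Prop :=
  t.le x y ∧ ∀ z, t.le x z → z ≠ x → t.le z y → z ∉ S

section

variable {I : Type*}

lemma IsForest.total {t : PartialOrder I} (ht : IsForest t) {x y v : I}
    (hx : t.le x v) (hy : t.le y v) : t.le x y ∨ t.le y x := by
  by_cases h : x = y
  · subst h; exact Or.inl (t.le_refl _)
  · exact ht v hx hy h

/-- `CutRel t S` as a partial order. Transitivity needs `t` to be a forest: an element of `(x, w]`
must be comparable with every intermediate `y`. -/
abbrev cutOrder (t : PartialOrder I) (ht : IsForest t) (S : Set I) : PartialOrder I where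
  le := CutRel t S
  lt x y := CutRel t S x y ∧ ¬ CutRel t S y x
  lt_iff_le_not_ge _ _ := Iff.rfl
  le_refl x := ⟨t.le_refl x, fun z h1 h2 h3 => absurd (t.le_antisymm _ _ h3 h1) h2⟩
  le_antisymm x y h1 h2 := t.le_antisymm _ _ h1.1 h2.1
  le_trans x y w h1 h2 := by
    refine ⟨t.le_trans _ _ _ h1.1 h2.1, fun z hxz hne hzw => ?_⟩
    rcases ht.total hzw h2.1 with h | h
    · exact h1.2 z hxz hne h
    · by_cases e : z = y
      · subst e; exact h1.2 z hxz hne h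
      · exact h2.2 z h e hzw

lemma cutOrder_isForest (t : PartialOrder I) (ht : IsForest t) (S : Set I) :
    IsForest (cutOrder t ht S) := by
  intro v x hx y hy _
  have key : ∀ {x y : I}, CutRel t S x v → CutRel t S y v → t.le x y → CutRel t S x y :=
    fun hx hy h => ⟨h, fun z h1 h2 h3 => hx.2 z h1 h2 (t.le_trans _ _ _ h3 hy.1)⟩
  rcases ht.total hx.1 hy.1 with h | h
  · exact Or.inl (key hx hy h)
  · exact Or.inr (key hy hx h)

lemma minSet_subset_of_singleGraft {f g : PartialOrder I} (h : SingleGraft f g) :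
    minSet g ⊆ minSet f := by
  obtain ⟨r, r', -, -, -, hg⟩ := h
  exact fun x hx y hy => hx y ((hg y x).2 (Or.inl hy))

lemma minSet_subset_of_graftLE {f g : PartialOrder I} (h : GraftLE f g) :
    minSet g ⊆ minSet f := by
  induction h with
  | refl => exact subset_rfl
  | tail _ h ih => exact (minSet_subset_of_singleGraft h).trans ih

lemma isForest_of_singleGraft {f g : PartialOrder I} (hf : IsForest f) (h : SingleGraft f g) :
    IsForest g := by
  obtain ⟨r, r', -, -, hr', hg⟩ := h
  -- The only new comparisons involve `r`, which lies below everything above `r'`.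
  have key : ∀ {x v : I}, f.le r' v → f.le x v → g.le r x ∨ g.le x r := by
    intro x v h1 h2
    rcases hf.total h1 h2 with h | h
    · exact Or.inl ((hg _ _).2 (Or.inr ⟨rfl, h⟩))
    · rw [hr' x h]
      exact Or.inl ((hg _ _).2 (Or.inr ⟨rfl, f.le_refl _⟩))
  intro v x hx y hy hne
  rcases (hg x v).1 hx with hx | ⟨rfl, hx⟩ <;> rcases (hg y v).1 hy with hy | ⟨rfl, hy⟩
  · exact (hf.total hx hy).imp (fun h => (hg _ _).2 (Or.inl h)) (fun h => (hg _ _).2 (Or.inl h))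
  · exact (key hy hx).symm
  · exact key hx hy
  · exact absurd rfl hne

/-- A grafting of `r'` below `r` removes only `r'` from the set of minimal elements. -/
lemma mem_minSet_of_graft {f g : PartialOrder I} {r r' : I}
    (hg : ∀ x y : I, g.le x y ↔ (f.le x y ∨ (x = r ∧ f.le r' y)))
    {x : I} (hx : x ∈ minSet f) (hne : x ≠ r') : x ∈ minSet g := by
  intro y hy
  rcases (hg y x).1 hy with h | ⟨-, h⟩
  · exact hx y h
  · exact absurd (hx _ h).symm hne

/-- A forest `f ⊑ t` is the cut of `t` along `minSet f`, and `minSet f` is a nonempty lower set. -/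
lemma cut_spec {t : PartialOrder I} (ht : IsRootedTree t) {f : PartialOrder I}
    (h : GraftLE f t) (hf : IsForest f) :
    (minSet f).Nonempty ∧ (∀ ⦃a b : I⦄, t.le a b → b ∈ minSet f → a ∈ minSet f) ∧
      ∀ x y, f.le x y ↔ CutRel t (minSet f) x y := by
  induction h using Relation.ReflTransGen.head_induction_on with
  | refl =>
    obtain ⟨⟨r, hr⟩, -⟩ := ht
    refine ⟨⟨r, fun y hy => t.le_antisymm _ _ hy (hr y)⟩, fun a b hab hb => hb a hab ▸ hb,
      fun x y => ⟨fun h => ⟨h, fun z h1 h2 _ hz => h2 (hz x h1).symm⟩, fun h => h.1⟩⟩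
  | @head f g hfg _ ih =>
    obtain ⟨hne, hlow, hcut⟩ := ih (isForest_of_singleGraft hf hfg)
    have hsub := minSet_subset_of_singleGraft hfg
    obtain ⟨r, r', hrr, hr, hr', hg⟩ := hfg
    have hr'm : r' ∈ minSet f := hr'
    have hrm : r ∈ minSet g := mem_minSet_of_graft hg hr hrr
    have hgrr : CutRel t (minSet g) r r' := (hcut _ _).1 ((hg _ _).2 (Or.inr ⟨rfl, f.le_refl _⟩))
    refine ⟨hne.mono hsub, fun a b hab hb => ?_, fun x y => ⟨fun h => ?_, fun h => ?_⟩⟩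
    · by_cases hbr : b = r'
      · subst hbr
        rcases ht.2.total hab hgrr.1 with h | h
        · exact hsub (hlow h hrm)
        -- `r` is the `t`-predecessor of `r'`, so `r ≤_t a ≤_t r'` leaves `a = r` or `a = r'`.
        · have h1 : g.le a b := (hcut _ _).2
            ⟨hab, fun z h1 h2 h3 => hgrr.2 z (t.le_trans _ _ _ h h1)
              (fun e => h2 (t.le_antisymm _ _ (e ▸ h) h1)) h3⟩
          rcases (hg _ _).1 h1 with h1 | ⟨rfl, -⟩
          · rw [hr' a h1]; exact hr'm
          · exact hr
      · exact hsub (hlow hab (mem_minSet_of_graft hg hb hbr))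
    · obtain ⟨h1, h2⟩ := (hcut x y).1 ((hg x y).2 (Or.inl h))
      refine ⟨h1, fun z hxz hzx hzy hz => ?_⟩
      by_cases hzr : z = r'
      · subst hzr
        have hxr : g.le x z := (hcut _ _).2
          ⟨hxz, fun w h3 h4 h5 => h2 w h3 h4 (t.le_trans _ _ _ h5 hzy)⟩
        have hry : g.le z y := (hcut _ _).2
          ⟨hzy, fun w h3 h4 h5 => h2 w (t.le_trans _ _ _ hxz h3)
            (fun e => hzx (t.le_antisymm _ _ (e ▸ h3) hxz)) h5⟩
        rcases (hg _ _).1 hxr with h3 | ⟨rfl, -⟩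
        · exact hzx (hr' x h3).symm
        · rcases (hg _ _).1 hry with h3 | ⟨e, -⟩
          -- Here `r` and `r'` are both below `y` in the forest `f`, yet both are minimal.
          · rcases hf.total h h3 with h4 | h4
            · exact hrr (hr' _ h4)
            · exact hrr (hr _ h4).symm
          · exact hzx e
      · exact h2 z hxz hzx hzy (mem_minSet_of_graft hg hz hzr)
    · have h1 : g.le x y := (hcut _ _).2 ⟨h.1, fun z h1 h2 h3 hz => h.2 z h1 h2 h3 (hsub hz)⟩
      rcases (hg _ _).1 h1 with h1 | ⟨rfl, h2⟩
      · exact h1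
      · have h3 : t.le r' y := ((hcut _ _).1 ((hg _ _).2 (Or.inl h2))).1
        exact absurd hr'm (h.2 r' hgrr.1 hrr.symm h3)

lemma exists_pred [Finite I] {t : PartialOrder I} (ht : IsForest t) {x y : I}
    (hyx : t.le y x) (hne : y ≠ x) :
    ∃ p, t.le p x ∧ p ≠ x ∧ ∀ z, t.le z x → z ≠ x → t.le z p := by
  let := t
  obtain ⟨p, hp⟩ := (Set.toFinite {z : I | t.le z x ∧ z ≠ x}).exists_maximal ⟨y, hyx, hne⟩
  refine ⟨p, hp.1.1, hp.1.2, fun z h1 h2 => ?_⟩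
  rcases ht.total h1 hp.1.1 with h | h
  · exact h
  · exact hp.2 ⟨h1, h2⟩ h

lemma minSet_cutOrder [Finite I] {t : PartialOrder I} (ht : IsRootedTree t) {S : Set I}
    (hne : S.Nonempty) (hS : ∀ ⦃a b : I⦄, t.le a b → b ∈ S → a ∈ S) :
    minSet (cutOrder t ht.2 S) = S := by
  ext x
  refine ⟨fun hx => ?_, fun hx y hy => ?_⟩
  · by_contra hxS
    obtain ⟨r, hr⟩ := ht.1
    obtain ⟨s, hs⟩ := hne
    have hrx : r ≠ x := fun e => hxS (e ▸ hS (hr s) hs)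
    obtain ⟨p, hp1, hp2, hp3⟩ := exists_pred ht.2 (hr x) hrx
    refine hp2 (hx p ⟨hp1, fun z h1 h2 h3 hz => ?_⟩)
    by_cases e : z = x
    · exact hxS (e ▸ hz)
    · exact h2 (t.le_antisymm _ _ (hp3 z h3 e) h1)
  · by_contra e
    exact hy.2 x hy.1 (Ne.symm e) (t.le_refl x) hx

/-- Deleting a maximal element `r'` of `S` from `S` grafts `r'` below its predecessor `r`. -/
lemma singleGraft_cutOrder {t : PartialOrder I} (ht : IsForest t) {S : Set I}
    (hS : ∀ ⦃a b : I⦄, t.le a b → b ∈ S → a ∈ S) {r r' : I} (hr' : r' ∈ S)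
    (hmax : ∀ z ∈ S, t.le r' z → z = r') (h1 : t.le r r') (h2 : r ≠ r')
    (h3 : ∀ z, t.le z r' → z ≠ r' → t.le z r) :
    SingleGraft (cutOrder t ht S) (cutOrder t ht (S \ {r'})) := by
  have hmin : ∀ x ∈ S, ∀ y, CutRel t S y x → y = x := fun x hx y hy => by
    by_contra e
    exact hy.2 x hy.1 (Ne.symm e) (t.le_refl x) hx
  have hrS : r ∈ S := hS h1 hr'
  refine ⟨r, r', h2, hmin r hrS, hmin r' hr', fun x y => ⟨fun h => ?_, ?_⟩⟩
  · by_cases hx : t.le x r' ∧ r' ≠ x ∧ t.le r' y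
    · obtain ⟨ha, hb, hc⟩ := hx
      refine Or.inr ⟨?_, hc, fun z k1 k2 _ hz => k2 (hmax z hz k1)⟩
      by_contra e
      exact h.2 r (h3 x ha hb.symm) (Ne.symm e) (t.le_trans _ _ _ h1 hc) ⟨hrS, h2⟩
    · refine Or.inl ⟨h.1, fun z k1 k2 k3 hz => h.2 z k1 k2 k3 ⟨hz, ?_⟩⟩
      rintro rfl
      exact hx ⟨k1, k2, k3⟩
  · rintro (h | ⟨rfl, h⟩)
    · exact ⟨h.1, fun z k1 k2 k3 hz => h.2 z k1 k2 k3 hz.1⟩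
    · refine ⟨t.le_trans _ _ _ h1 h.1, fun z k1 k2 k3 hz => ?_⟩
      rcases ht.total k3 h.1 with k | k
      · exact k2 (t.le_antisymm _ _ (h3 z k hz.2) k1)
      · exact hz.2 (hmax z hz.1 k)

lemma graftLE_cutOrder [Finite I] {t : PartialOrder I} (ht : IsRootedTree t) {S : Set I}
    (hne : S.Nonempty) (hS : ∀ ⦃a b : I⦄, t.le a b → b ∈ S → a ∈ S) (S' : Set I)
    (hS' : ∀ ⦃a b : I⦄, t.le a b → b ∈ S' → a ∈ S') (hsub : S ⊆ S') :
    GraftLE (cutOrder t ht.2 S') (cutOrder t ht.2 S) := by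
  induction S' using WellFoundedLT.induction with
  | ind S' ih =>
    by_cases heq : S' ⊆ S
    · rw [subset_antisymm heq hsub]
      exact Relation.ReflTransGen.refl
    · obtain ⟨s, hs, hsS⟩ := Set.not_subset.1 heq
      obtain ⟨r', ⟨hr', hr'S⟩, hmax⟩ : ∃ m, m ∈ S' \ S ∧ ∀ z ∈ S' \ S, t.le m z → z = m := by
        let := t
        obtain ⟨m, hm⟩ := (Set.toFinite (S' \ S)).exists_maximal ⟨s, hs, hsS⟩
        exact ⟨m, hm.1, fun z hz h => t.le_antisymm _ _ (hm.2 hz h) h⟩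
      -- `S` is a lower set, so `r'` is maximal in all of `S'`, not only in `S' \ S`.
      have hmax' : ∀ z ∈ S', t.le r' z → z = r' := fun z hz h =>
        hmax z ⟨hz, fun hzS => hr'S (hS h hzS)⟩ h
      obtain ⟨q, hq⟩ := ht.1
      obtain ⟨u, hu⟩ := hne
      obtain ⟨r, h1, h2, h3⟩ := exists_pred ht.2 (hq r') (fun e => hr'S (e ▸ hS (hq u) hu))
      refine Relation.ReflTransGen.head (singleGraft_cutOrder ht.2 hS' hr' hmax' h1 h2 h3)
        (ih _ ⟨Set.sdiff_subset, fun h => (h hr').2 rfl⟩ ?_ ?_)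
      · rintro a b hab ⟨hb, hbr⟩
        refine ⟨hS' hab hb, ?_⟩
        rintro rfl
        exact hbr (hmax' b hb hab)
      · exact fun x hx => ⟨hsub hx, fun e => hr'S (e ▸ hx)⟩

lemma eq_cutOrder {t : PartialOrder I} (ht : IsRootedTree t) {f : PartialOrder I}
    (h : GraftLE f t) (hf : IsForest f) : f = cutOrder t ht.2 (minSet f) :=
  PartialOrder.ext fun x y => (cut_spec ht h hf).2.2 x y

lemma cutOrder_graftLE [Finite I] {t : PartialOrder I} (ht : IsRootedTree t) {S : Set I}
    (hne : S.Nonempty) (hS : ∀ ⦃a b : I⦄, t.le a b → b ∈ S → a ∈ S) :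
    GraftLE (cutOrder t ht.2 S) t := by
  obtain ⟨h1, h2, -⟩ := cut_spec ht Relation.ReflTransGen.refl ht.2
  have h := graftLE_cutOrder ht h1 h2 S hS fun x hx => by
    obtain ⟨r, hr⟩ := ht.1
    obtain ⟨s, hs⟩ := hne
    exact hx r (hr x) ▸ hS (hr s) hs
  rwa [← eq_cutOrder ht Relation.ReflTransGen.refl ht.2] at h

end

/-- The map sending a forest `f ⊑ t` to its set of minimal elements is an order
anti-isomorphism from the interval `[⊥, t]` for the grafting order onto the
nonempty lower sets of the rooted tree `t`, ordered by inclusion. -/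
theorem interval_antiIso_nonempty_lowerSets {I : Type*} [Fintype I]
    (t : PartialOrder I) (ht : IsRootedTree t) :
    ∃ e : {f : PartialOrder I // IsForest f ∧ GraftLE f t} ≃
          {S : Set I // S.Nonempty ∧ ∀ ⦃a b : I⦄, t.le a b → b ∈ S → a ∈ S},
      (∀ f, (e f : Set I) = {x : I | ∀ y : I, (f : PartialOrder I).le y x → y = x}) ∧
      (∀ f g : {f : PartialOrder I // IsForest f ∧ GraftLE f t}, GraftLE f.1 g.1 ↔
        (e g : Set I) ⊆ (e f : Set I)) := by
  refine ⟨⟨fun f => ⟨minSet f.1, (cut_spec ht f.2.2 f.2.1).1, (cut_spec ht f.2.2 f.2.1).2.1⟩,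
    fun S => ⟨cutOrder t ht.2 S.1, cutOrder_isForest t ht.2 S.1,
      cutOrder_graftLE ht S.2.1 S.2.2⟩,
    fun f => Subtype.ext (eq_cutOrder ht f.2.2 f.2.1).symm,
    fun S => Subtype.ext (minSet_cutOrder ht S.2.1 S.2.2)⟩, fun f => rfl, fun f g =>
    ⟨fun h => minSet_subset_of_graftLE h, fun h => ?_⟩⟩
  rw [eq_cutOrder ht f.2.2 f.2.1, eq_cutOrder ht g.2.2 g.2.1]
  obtain ⟨h1, h2, -⟩ := cut_spec ht g.2.2 g.2.1
  exact graftLE_cutOrder ht h1 h2 _ (cut_spec ht f.2.2 f.2.1).2.1 h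
end

section
/- Let t be a rooted tree on a finite type I with root r. Say that t is a corolla if every element other than r covers r and is maximal, equivalently: for all x, y, if x ≤_t y and x ≠ y then x = r. Then the Möbius number μ(⊥,⊤) of the poset of nonempty lower sets of t, ordered by inclusion, equals (-1)^(|I|-1) if t is a corolla, and equals 0 otherwise. -/
/-- The poset of nonempty lower sets of the order `t` on `I`, ordered by inclusion. -/
abbrev NLS {I : Type*} (t : PartialOrder I) : Type _ :=
  {S : Set I // S.Nonempty ∧ ∀ ⦃a b : I⦄, t.le a b → b ∈ S → a ∈ S}

/-- `x` is a minimal element of `I \ {r}`. -/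
def IsTreeAtom {I : Type*} (t : PartialOrder I) (r x : I) : Prop :=
  x ≠ r ∧ ∀ y, t.le y x → y = x ∨ y = r

/-- `T` consists of the root and atoms only. -/
def IsCorollaSet {I : Type*} {t : PartialOrder I} (r : I) (T : NLS t) : Prop :=
  ∀ x ∈ T.1, x = r ∨ IsTreeAtom t r x

open Classical in
/-- The claimed value of `μ({r}, T)`: the sign `(-1)^(|T|-1)` if `T` consists of
the root and atoms, and `0` otherwise. -/
noncomputable def corollaSign {I : Type*} {t : PartialOrder I} (r : I) (T : NLS t) : ℤ :=
  if IsCorollaSet r T then (-1) ^ (T.1.ncard - 1) else 0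

/-- The least element `{r}` of the poset of nonempty lower sets. -/
abbrev rootNLS {I : Type*} (t : PartialOrder I) (r : I) (hr : ∀ v : I, t.le r v) : NLS t :=
  ⟨{r}, Set.singleton_nonempty r, fun a b hab hb =>
        show a ∈ ({r} : Set I) from t.le_antisymm a r (hb ▸ hab) (hr a)⟩

lemma root_mem {I : Type*} {t : PartialOrder I} {r : I} (hr : ∀ v : I, t.le r v)
    (T : NLS t) : r ∈ T.1 := by
  obtain ⟨x, hx⟩ := T.2.1
  exact T.2.2 (hr x) hx

lemma rootNLS_le {I : Type*} {t : PartialOrder I} {r : I} (hr : ∀ v : I, t.le r v)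
    (T : NLS t) : rootNLS t r hr ≤ T := by
  intro x hx
  exact (show x = r from hx) ▸ root_mem hr T

lemma exists_treeAtom {I : Type*} [Fintype I] {t : PartialOrder I} {r : I}
    (hr : ∀ v : I, t.le r v) (S : NLS t) (hS : rootNLS t r hr ≠ S) :
    ∃ x ∈ S.1, IsTreeAtom t r x := by
  let := t
  have hne : (S.1 \ {r}).Nonempty := by
    by_contra h
    rw [Set.not_nonempty_iff_eq_empty, Set.sdiff_eq_empty] at h
    exact hS (le_antisymm (rootNLS_le hr S) h)
  obtain ⟨x, hx⟩ := (Set.toFinite (S.1 \ {r})).exists_minimal hne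
  refine ⟨x, hx.prop.1, hx.prop.2, fun y hy => ?_⟩
  by_cases hyr : y = r
  · exact Or.inr hyr
  · exact Or.inl (le_antisymm hy (hx.le_of_le ⟨S.2.2 hy hx.prop.1, hyr⟩ hy))

open Classical in
/-- The claimed values satisfy the recursion that characterizes the Möbius function. -/
lemma sum_corollaSign {I : Type*} [Fintype I] {t : PartialOrder I} {r : I}
    (hr : ∀ v : I, t.le r v) [LocallyFiniteOrder (NLS t)]
    (S : NLS t) (hS : rootNLS t r hr ≠ S) :
    ∑ T ∈ Finset.Icc (rootNLS t r hr) S, corollaSign r T = 0 := by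
  set B : Finset I := Finset.univ.filter (fun x => x ∈ S.1 ∧ IsTreeAtom t r x) with hB
  have hBmem : ∀ x, x ∈ B ↔ x ∈ S.1 ∧ IsTreeAtom t r x := by simp [hB]
  obtain ⟨a, ha, ha'⟩ := exists_treeAtom hr S hS
  have key := Finset.sum_powerset_neg_one_pow_card_of_nonempty ⟨a, (hBmem a).2 ⟨ha, ha'⟩⟩
  rw [← key]
  unfold corollaSign
  rw [← Finset.sum_filter]
  symm
  have hroot : ∀ A ∈ B.powerset, r ∉ A := fun A hA h =>
    ((hBmem r).1 (Finset.mem_powerset.1 hA h)).2.1 rfl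
  refine Finset.sum_bij
    (fun A hA => (⟨insert r (A : Set I), Set.insert_nonempty _ _, ?_⟩ : NLS t)) ?_ ?_ ?_ ?_
  · rintro x y hxy (rfl | hy)
    · exact Or.inl (t.le_antisymm _ _ hxy (hr x))
    · rcases ((hBmem y).1 (Finset.mem_powerset.1 hA hy)).2.2 x hxy with rfl | rfl
      · exact Or.inr hy
      · exact Or.inl rfl
  · intro A hA
    rw [Finset.mem_filter, Finset.mem_Icc]
    refine ⟨⟨rootNLS_le hr _, ?_⟩, ?_⟩
    · rintro x (rfl | hx)
      · exact root_mem hr S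
      · exact ((hBmem x).1 (Finset.mem_powerset.1 hA hx)).1
    · rintro x (rfl | hx)
      · exact Or.inl rfl
      · exact Or.inr ((hBmem x).1 (Finset.mem_powerset.1 hA hx)).2
  · intro A hA A' hA' h
    have h1 : insert r (A : Set I) = insert r (A' : Set I) := congrArg Subtype.val h
    have h2 : insert r A = insert r A' := by exact_mod_cast h1
    rw [← Finset.erase_insert (hroot A hA), h2, Finset.erase_insert (hroot A' hA')]
  · intro T hT
    rw [Finset.mem_filter, Finset.mem_Icc] at hT
    obtain ⟨⟨-, hTS⟩, hT⟩ := hT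
    refine ⟨Finset.univ.filter (fun x => x ∈ T.1 ∧ x ≠ r), ?_, ?_⟩
    · rw [Finset.mem_powerset]
      intro x hx
      obtain ⟨hx, hxr⟩ := (Finset.mem_filter.1 hx).2
      exact (hBmem x).2 ⟨hTS hx, (hT x hx).resolve_left hxr⟩
    · apply Subtype.ext
      ext x
      by_cases hx : x = r
      · simp [hx, root_mem hr T]
      · simp [hx]
  · intro A hA
    have : (insert r (A : Set I)).ncard = A.card + 1 := by
      rw [← Finset.coe_insert, Set.ncard_coe_finset, Finset.card_insert_of_notMem (hroot A hA)]
    simp [this]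

open IncidenceAlgebra Classical in
lemma mu_eq_corollaSign {I : Type*} [Fintype I] {t : PartialOrder I} {r : I}
    (hr : ∀ v : I, t.le r v) [DecidableEq (NLS t)] [LocallyFiniteOrder (NLS t)] (S : NLS t) :
    mu ℤ (rootNLS t r hr) S = corollaSign r S := by
  induction S using WellFoundedLT.induction with
  | ind S ih =>
    by_cases hS : rootNLS t r hr = S
    · subst hS
      rw [mu_self]
      simp [corollaSign, IsCorollaSet]
    · rw [mu_eq_neg_sum_Ico_of_ne hS,
        Finset.sum_congr rfl fun T hT => ih T (Finset.mem_Ico.1 hT).2]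
      have h := sum_corollaSign hr S hS
      rw [← Finset.sum_Ico_add_eq_sum_Icc (rootNLS_le hr S)] at h
      linarith

open IncidenceAlgebra Classical in
/-- For a rooted tree `t` on a finite type `I` with root `r`, the Möbius number of the
poset of nonempty lower sets of `t` (from its least element `{r}` to its greatest
element `I`) is `(-1)^(|I|-1)` if `t` is a corolla, and `0` otherwise. -/
theorem mu_nonempty_lowerSets_rootedTree {I : Type*} [Fintype I]
    (t : PartialOrder I) (ht : IsForest t) (r : I) (hr : ∀ v : I, t.le r v)
    [DecidableEq (NLS t)] [LocallyFiniteOrder (NLS t)] :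
    mu ℤ
      (⟨{r}, Set.singleton_nonempty r, fun a b hab hb =>
        show a ∈ ({r} : Set I) from t.le_antisymm a r (hb ▸ hab) (hr a)⟩ : NLS t)
      (⟨Set.univ, ⟨r, trivial⟩, fun a b _ _ => trivial⟩ : NLS t) =
      if ∀ x y : I, t.le x y → x ≠ y → x = r then
        (-1 : ℤ) ^ (Fintype.card I - 1)
      else 0 := by
  refine (mu_eq_corollaSign hr _).trans ?_
  unfold corollaSign
  -- For `S = I`, consisting of the root and atoms is the corolla condition.
  have hiff : IsCorollaSet r (⟨Set.univ, ⟨r, trivial⟩, fun a b _ _ => trivial⟩ : NLS t) ↔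
      ∀ x y : I, t.le x y → x ≠ y → x = r := by
    constructor
    · intro h x y hxy hne
      rcases h y trivial with rfl | hy
      · exact t.le_antisymm _ _ hxy (hr x)
      · exact (hy.2 x hxy).resolve_left hne
    · intro h x _
      by_cases hx : x = r
      · exact Or.inl hx
      · refine Or.inr ⟨hx, fun y hy => ?_⟩
        by_cases hyx : y = x
        · exact Or.inl hyx
        · exact Or.inr (h y x hy hyx)
  simp only [hiff, Set.ncard_univ, Nat.card_eq_fintype_card]
end

section
/- For every natural number n ≥ 1, the number of partial orders on Fin n that are rooted trees (i.e., have a least element and all principal lower sets {u : u ≤ v} are chains) equals n^(n-1). -/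
open Finset

lemma sum_powerset_mul_pow {J : Type*} (S : Finset J) (x y : ℕ) :
    ∑ A ∈ S.powerset, A.card * x ^ A.card * y ^ (S.card - A.card) =
      S.card * x * (x + y) ^ (S.card - 1) := by
  rw [sum_powerset_apply_card (fun i => i * x ^ i * y ^ (S.card - i))]
  cases hs : S.card with
  | zero => simp
  | succ m =>
    rw [sum_range_succ', add_tsub_cancel_right, add_pow, mul_sum]
    simp only [zero_mul, smul_eq_mul, mul_zero, add_zero]
    refine sum_congr rfl fun i _ => ?_
    have h := Nat.add_one_mul_choose_eq m i
    rw [Nat.add_sub_add_right]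
    calc _ = ((m + 1).choose (i + 1) * (i + 1)) * x ^ (i + 1) * y ^ (m - i) := by ring
      _ = _ := by rw [← h]; push_cast; ring

section ParentMaps

variable {I : Type*} [Fintype I] [DecidableEq I]

/-- Parent maps of forests on `S ∪ R` with set of roots `R` (for disjoint `S` and `R`): maps that
fix every point outside `S`, send `S` into `S ∪ R`, and leave no nonempty subset of `S` invariant.
The last condition expresses acyclicity. -/
def parentMaps (S R : Finset I) : Finset (I → I) :=
  univ.filter fun f => (∀ x, x ∉ S → f x = x) ∧ (∀ x ∈ S, f x ∈ S ∪ R) ∧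
    ∀ T ⊆ S, (∀ x ∈ T, f x ∈ T) → T = ∅

lemma mem_parentMaps {S R : Finset I} {f : I → I} :
    f ∈ parentMaps S R ↔ (∀ x, x ∉ S → f x = x) ∧ (∀ x ∈ S, f x ∈ S ∪ R) ∧
      ∀ T ⊆ S, (∀ x ∈ T, f x ∈ T) → T = ∅ := by
  simp [parentMaps]

/-- The number of maps that send `A` to `R` and fix every other point. -/
lemma card_piFinset_ite (A R : Finset I) :
    (Fintype.piFinset fun x => if x ∈ A then R else {x}).card = R.card ^ A.card := by
  have h (x : I) : (if x ∈ A then R else {x}).card = if x ∈ A then R.card else 1 := by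
    split_ifs <;> simp
  simp [Fintype.card_piFinset, h]

/-- Forests in which the children of the roots form the set `A`: a map `A → R` together with a
forest on `S` with set of roots `A`. -/
lemma card_fiber (S R A : Finset I) (hSR : Disjoint S R) (hA : A ⊆ S) :
    ((parentMaps S R).filter fun f => (S.filter fun x => f x ∈ R) = A).card =
      R.card ^ A.card * (parentMaps (S \ A) A).card := by
  rw [← card_piFinset_ite A R, ← card_product]
  refine card_nbij' (fun f => (fun x => if x ∈ A then f x else x, fun x => if x ∈ A then x else f x))
    (fun p x => if x ∈ A then p.1 x else p.2 x) ?_ ?_ ?_ ?_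
  · intro f hf
    simp only [coe_filter, Set.mem_ofPred_eq, mem_parentMaps] at hf
    obtain ⟨⟨h1, h2, h3⟩, h4⟩ := hf
    have h5 (x : I) : x ∈ A ↔ x ∈ S ∧ f x ∈ R := by rw [← h4]; simp
    simp only [coe_product, Set.mem_prod, mem_coe, Fintype.mem_piFinset, mem_parentMaps]
    refine ⟨fun x => ?_, fun x hx => ?_, fun x hx => ?_, fun T hT hTc => ?_⟩
    · by_cases hx : x ∈ A
      · simpa [hx] using ((h5 x).1 hx).2
      · simp [hx]
    · split_ifs with h
      · rfl
      · exact h1 x fun hxS => hx (mem_sdiff.2 ⟨hxS, h⟩)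
    · have hx' := mem_sdiff.1 hx
      have hxR : f x ∉ R := fun h => hx'.2 ((h5 x).2 ⟨hx'.1, h⟩)
      have := h2 x hx'.1
      simp only [mem_union, mem_sdiff, hx'.2, if_false] at this ⊢
      tauto
    · refine h3 T (hT.trans sdiff_subset) fun x hx => ?_
      simpa [(mem_sdiff.1 (hT hx)).2] using hTc x hx
  · rintro ⟨h, g⟩ hp
    simp only [coe_product, Set.mem_prod, mem_coe, Fintype.mem_piFinset, mem_parentMaps] at hp
    obtain ⟨h0, h1, h2, h3⟩ := hp
    have hR (x : I) (hx : x ∈ A) : h x ∈ R := by simpa [hx] using h0 x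
    have hS (x : I) (hx : x ∈ S) (hxA : x ∉ A) : g x ∈ S := by
      have := h2 x (mem_sdiff.2 ⟨hx, hxA⟩)
      simp only [mem_union, mem_sdiff] at this
      rcases this with h | h
      · exact h.1
      · exact hA h
    simp only [coe_filter, Set.mem_ofPred_eq, mem_parentMaps]
    refine ⟨⟨fun x hx => ?_, fun x hx => ?_, fun T hT hTc => ?_⟩, ?_⟩
    · have hxA : x ∉ A := fun h => hx (hA h)
      simpa [hxA] using h1 x (by simp [hx])
    · split_ifs with hxA
      · exact mem_union_right _ (hR x hxA)
      · exact mem_union_left _ (hS x hx hxA)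
    · -- An invariant set avoids `A`, because `A` is sent to `R`, outside of `S`.
      have hTA : ∀ x ∈ T, x ∉ A := fun x hx hxA => by
        have := hTc x hx
        rw [if_pos hxA] at this
        exact disjoint_left.1 hSR (hT this) (hR x hxA)
      refine h3 T (fun x hx => mem_sdiff.2 ⟨hT hx, hTA x hx⟩) fun x hx => ?_
      simpa [hTA x hx] using hTc x hx
    · ext x
      simp only [mem_filter]
      by_cases hxA : x ∈ A
      · simp [hxA, hA hxA, hR x hxA]
      · simp only [hxA, if_false, iff_false, not_and]
        exact fun hx => disjoint_left.1 hSR (hS x hx hxA)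
  · intro f _
    funext x
    by_cases hx : x ∈ A <;> simp [hx]
  · rintro ⟨h, g⟩ hp
    simp only [coe_product, Set.mem_prod, mem_coe, Fintype.mem_piFinset, mem_parentMaps] at hp
    obtain ⟨h0, h1, -⟩ := hp
    ext x
    · by_cases hx : x ∈ A
      · simp [hx]
      · have hx0 : h x = x := by simpa [hx] using h0 x
        simp [hx, hx0]
    · by_cases hx : x ∈ A
      · simpa [hx] using (h1 x (by simp [hx])).symm
      · simp [hx]

lemma card_parentMaps_eq_sum (S R : Finset I) (hSR : Disjoint S R) :
    (parentMaps S R).card =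
      ∑ A ∈ S.powerset, R.card ^ A.card * (parentMaps (S \ A) A).card := by
  rw [card_eq_sum_card_fiberwise (f := fun f => S.filter fun x => f x ∈ R) (t := S.powerset)
    (fun f _ => mem_coe.2 (mem_powerset.2 (filter_subset _ _)))]
  exact sum_congr rfl fun A hA => card_fiber S R A hSR (mem_powerset.1 hA)

theorem card_parentMaps (S R : Finset I) (hSR : Disjoint S R) :
    (S.card + R.card) * (parentMaps S R).card = R.card * (S.card + R.card) ^ S.card := by
  induction hs : S.card using Nat.strong_induction_on generalizing S R with
  | _ s ih =>
  rcases S.eq_empty_or_nonempty with rfl | hS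
  · have h : parentMaps (∅ : Finset I) R = {id} := by
      ext f
      simp only [mem_parentMaps, mem_singleton]
      constructor
      · rintro ⟨h, -⟩
        funext x
        exact h x (by simp)
      · rintro rfl
        simp
    simp only [card_empty] at hs
    simp [h, ← hs]
  have hs0 : 0 < s := hs ▸ hS.card_pos
  have key : s * (parentMaps S R).card = s * R.card * (R.card + s) ^ (s - 1) := by
    have h := sum_powerset_mul_pow S R.card s
    rw [hs] at h
    rw [card_parentMaps_eq_sum S R hSR, ← h, mul_sum]
    refine sum_congr rfl fun A hA => ?_
    rw [mem_powerset] at hA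
    rcases A.eq_empty_or_nonempty with rfl | hAne
    · -- Without roots, `S` itself is invariant, so there is no parent map.
      have h0 : parentMaps (S \ ∅) ∅ = ∅ := by
        rw [sdiff_empty]
        refine eq_empty_of_forall_notMem fun f hf => ?_
        rw [mem_parentMaps] at hf
        exact hS.ne_empty (hf.2.2 S subset_rfl fun x hx => by simpa using hf.2.1 x hx)
      rw [h0]
      simp
    · have hle := card_le_card hA
      have hpos := hAne.card_pos
      have hc : (S \ A).card = s - A.card := by rw [card_sdiff_of_subset hA, hs]
      have := ih (s - A.card) (by omega) (S \ A) A sdiff_disjoint hc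
      rw [Nat.sub_add_cancel (by omega)] at this
      calc _ = R.card ^ A.card * (s * (parentMaps (S \ A) A).card) := by ring
        _ = _ := by rw [this]; ring
  have key' := Nat.eq_of_mul_eq_mul_left hs0 (key.trans (mul_assoc _ _ _))
  rw [key']
  obtain ⟨m, rfl⟩ : ∃ m, s = m + 1 := ⟨s - 1, by omega⟩
  rw [add_tsub_cancel_right, add_comm (m + 1), pow_succ]
  ring

end ParentMaps

section AncestorOrder

variable {I : Type*} [Fintype I] [DecidableEq I]

/-- Parent maps of the trees with root `r`. -/
abbrev treeMaps (r : I) : Finset (I → I) := parentMaps (univ \ {r}) {r}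

lemma mem_treeMaps {r : I} {f : I → I} :
    f ∈ treeMaps r ↔ f r = r ∧ ∀ T : Finset I, r ∉ T → (∀ x ∈ T, f x ∈ T) → T = ∅ := by
  rw [mem_parentMaps]
  constructor
  · rintro ⟨h1, -, h3⟩
    exact ⟨h1 r (by simp), fun T hT => h3 T fun x hx => by
      simp only [mem_sdiff, mem_univ, mem_singleton, true_and]
      rintro rfl
      exact hT hx⟩
  · rintro ⟨h1, h3⟩
    refine ⟨fun x hx => ?_, fun x _ => ?_, fun T hT => h3 T fun h => by simpa using hT h⟩
    · have : x = r := by simpa using hx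
      rw [this, h1]
    · simp

lemma exists_iterate_eq_root {r : I} {f : I → I} (hf : f ∈ treeMaps r) (v : I) :
    ∃ k, f^[k] v = r := by
  classical
  rw [mem_treeMaps] at hf
  by_contra! h
  have := hf.2 (univ.filter fun u => ∃ k, f^[k] v = u) (by simpa using h) (by
    simp only [mem_filter, mem_univ, true_and]
    rintro _ ⟨k, rfl⟩
    exact ⟨k + 1, Function.iterate_succ_apply' f k v⟩)
  have hv : v ∈ (∅ : Finset I) := by
    rw [← this]
    simpa using ⟨0, rfl⟩
  simp at hv

/-- A periodic point of a tree's parent map is the root. -/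
lemma eq_root_of_iterate_eq {r : I} {f : I → I} (hf : f ∈ treeMaps r) {v : I} {k : ℕ}
    (hk : 0 < k) (h : f^[k] v = v) : v = r := by
  obtain ⟨m, hm⟩ := exists_iterate_eq_root hf v
  have hr : f r = r := (mem_treeMaps.1 hf).1
  have h1 : f^[k * m] v = v := by
    rw [Function.iterate_mul]
    exact Function.iterate_fixed h m
  obtain ⟨d, hd⟩ : ∃ d, k * m = d + m := ⟨k * m - m, by
    have := Nat.le_mul_of_pos_left m hk
    omega⟩
  rw [hd, Function.iterate_add_apply, hm, Function.iterate_fixed hr] at h1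
  exact h1.symm

/-- The ancestor order of a parent map: `u ≤ v` when `u` is an iterated parent of `v`. -/
@[reducible]
def ancestorOrder {r : I} {f : I → I} (hf : f ∈ treeMaps r) : PartialOrder I where
  le u v := ∃ k, f^[k] v = u
  le_refl v := ⟨0, rfl⟩
  le_trans := by
    rintro _ _ w ⟨a, rfl⟩ ⟨b, rfl⟩
    exact ⟨a + b, Function.iterate_add_apply f a b w⟩
  le_antisymm := by
    rintro u v ⟨a, ha⟩ ⟨b, hb⟩
    rcases Nat.eq_zero_or_pos a with rfl | ha0
    · exact ha.symm
    · have hv : f^[b + a] v = v := by rw [Function.iterate_add_apply, ha, hb]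
      have hu : f^[a + b] u = u := by rw [Function.iterate_add_apply, hb, ha]
      rw [eq_root_of_iterate_eq hf (by omega) hv, eq_root_of_iterate_eq hf (by omega) hu]

lemma isRootedTree_ancestorOrder {r : I} {f : I → I} (hf : f ∈ treeMaps r) :
    IsRootedTree (ancestorOrder hf) := by
  refine ⟨⟨r, exists_iterate_eq_root hf⟩, ?_⟩
  rintro w _ ⟨a, rfl⟩ _ ⟨b, rfl⟩ -
  rcases le_total a b with h | h
  · right
    exact ⟨b - a, by rw [← Function.iterate_add_apply, Nat.sub_add_cancel h]⟩
  · left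
    exact ⟨a - b, by rw [← Function.iterate_add_apply, Nat.sub_add_cancel h]⟩

/-- If `f` and `g` have the same ancestor order, then `f v` is a strict ancestor of `v`, hence an
ancestor of the parent `g v`. By symmetry and antisymmetry this gives `f v = g v`. -/
lemma le_parent_of_le {r s : I} {f g : I → I} (hf : f ∈ treeMaps r) (hg : g ∈ treeMaps s)
    (h : ancestorOrder hf = ancestorOrder hg) {v : I} (hv : v ≠ r) :
    (ancestorOrder hg).le (f v) (g v) := by
  have h1 : (ancestorOrder hg).le (f v) v := h ▸ (⟨1, rfl⟩ : (ancestorOrder hf).le (f v) v)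
  obtain ⟨k, hk⟩ := h1
  cases k with
  | zero => exact absurd (eq_root_of_iterate_eq hf (k := 1) one_pos hk.symm) hv
  | succ k => exact ⟨k, hk⟩

lemma ancestorOrder_injective {r s : I} {f g : I → I} (hf : f ∈ treeMaps r) (hg : g ∈ treeMaps s)
    (h : ancestorOrder hf = ancestorOrder hg) : r = s ∧ f = g := by
  have hrs : r = s := by
    have h1 : (ancestorOrder hf).le s r := h ▸ exists_iterate_eq_root hg r
    exact (ancestorOrder hf).le_antisymm _ _ (exists_iterate_eq_root hf s) h1
  subst hrs
  refine ⟨rfl, funext fun v => ?_⟩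
  by_cases hv : v = r
  · rw [hv, (mem_treeMaps.1 hf).1, (mem_treeMaps.1 hg).1]
  · have h1 := le_parent_of_le hf hg h hv
    have h2 := le_parent_of_le hg hf h.symm hv
    rw [h] at h2
    exact (ancestorOrder hg).le_antisymm _ _ h1 h2

/-- Every rooted tree is an ancestor order: the parent map sends a vertex other than the root to
its greatest strict ancestor, which exists because the strict ancestors form a nonempty finite
chain. -/
lemma exists_ancestorOrder_eq (t : PartialOrder I) (ht : IsRootedTree t) :
    ∃ (r : I) (f : I → I) (hf : f ∈ treeMaps r), ancestorOrder hf = t := by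
  classical
  obtain ⟨⟨r, hr⟩, hc⟩ := ht
  have hp : ∀ v, ∃ p, (v = r → p = r) ∧ (v ≠ r → p < v ∧ ∀ u < v, u ≤ p) := by
    intro v
    by_cases hv : v = r
    · exact ⟨r, by simp [hv]⟩
    · obtain ⟨p, hpm⟩ := (univ.filter (· < v)).exists_maximal
        ⟨r, by simpa using lt_of_le_of_ne (hr v) (Ne.symm hv)⟩
      have hpv : p < v := by simpa using hpm.prop
      refine ⟨p, by simp [hv], fun _ => ⟨hpv, fun u hu => ?_⟩⟩
      by_cases hup : u = p
      · exact hup.le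
      · rcases hc v hu.le hpv.le hup with h | h
        · exact h
        · exact hpm.le_of_ge (by simpa using hu) h
  choose f hf using hp
  have hfr : f r = r := (hf r).1 rfl
  have hmem : f ∈ treeMaps r := by
    rw [mem_treeMaps]
    refine ⟨hfr, fun T hT hTc => ?_⟩
    by_contra hne
    obtain ⟨x, hx⟩ := T.exists_minimal (nonempty_iff_ne_empty.2 hne)
    have hxr : x ≠ r := fun h => hT (h ▸ hx.prop)
    exact hx.not_lt (hTc x hx.prop) ((hf x).2 hxr).1
  refine ⟨r, f, hmem, ?_⟩
  have hle : ∀ v, f v ≤ v := fun v => by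
    by_cases hv : v = r
    · rw [hv, hfr]
    · exact ((hf v).2 hv).1.le
  refine PartialOrder.ext fun u v => ?_
  change (∃ k, f^[k] v = u) ↔ u ≤ v
  constructor
  · rintro ⟨k, rfl⟩
    induction k with
    | zero => exact le_rfl
    | succ k ih =>
      rw [Function.iterate_succ_apply']
      exact (hle _).trans ih
  · induction v using WellFoundedLT.induction with
    | _ v ih =>
    intro huv
    rcases huv.eq_or_lt with rfl | hlt
    · exact ⟨0, rfl⟩
    · have hv : v ≠ r := by
        rintro rfl
        exact (hr u).not_gt hlt
      obtain ⟨k, hk⟩ := ih (f v) ((hf v).2 hv).1 (((hf v).2 hv).2 u hlt)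
      exact ⟨k + 1, hk⟩

end AncestorOrder

/-- Cayley's formula: the number of partial orders on `Fin n` that are rooted trees
equals `n^(n-1)`. -/
theorem card_rootedTrees (n : ℕ) (hn : 1 ≤ n) :
    Nat.card {t : PartialOrder (Fin n) // IsRootedTree t} = n ^ (n - 1) := by
  let φ : (Σ r : Fin n, treeMaps r) → {t : PartialOrder (Fin n) // IsRootedTree t} :=
    fun p => ⟨ancestorOrder p.2.2, isRootedTree_ancestorOrder p.2.2⟩
  have hφ : Function.Bijective φ := by
    constructor
    · rintro ⟨r, f, hf⟩ ⟨s, g, hg⟩ h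
      obtain ⟨rfl, rfl⟩ := ancestorOrder_injective hf hg (congrArg Subtype.val h)
      rfl
    · rintro ⟨t, ht⟩
      obtain ⟨r, f, hf, rfl⟩ := exists_ancestorOrder_eq t ht
      exact ⟨⟨r, f, hf⟩, rfl⟩
  rw [← Nat.card_congr (Equiv.ofBijective φ hφ), Nat.card_eq_fintype_card, Fintype.card_sigma]
  have hcard (r : Fin n) : n * (treeMaps r).card = n ^ (n - 1) := by
    have h := card_parentMaps (univ \ {r}) {r} sdiff_disjoint
    have hc : (univ \ {r} : Finset (Fin n)).card = n - 1 := by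
      rw [card_sdiff_of_subset (by simp)]
      simp
    rwa [hc, card_singleton, Nat.sub_add_cancel hn, one_mul] at h
  -- All the summands agree, since `n` times each of them is `n ^ (n - 1)`.
  have hconst (r : Fin n) : (treeMaps r).card = (treeMaps (⟨0, hn⟩ : Fin n)).card :=
    Nat.eq_of_mul_eq_mul_left hn ((hcard r).trans (hcard _).symm)
  simp only [Fintype.card_coe, hconst, sum_const, card_univ, Fintype.card_fin, smul_eq_mul]
  exact hcard _
end
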